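/- There exist a probability density ϱ ∈ C^∞(ℝ²) and a C^∞ vector field b: ℝ² → ℝ² such that the equation Δϱ − div(ϱb) = 0 holds in the weak sense and |b|ϱ ∈ L¹(ℝ²), but |∇ϱ| does not belong to L¹(ℝ²). -/

import Mathlib

open MeasureTheory Real

noncomputable section

/-- First partial derivative (with respect to the first coordinate) on `ℝ²`. -/
def pd1 (f : ℝ × ℝ → ℝ) (p : ℝ × ℝ) : ℝ := fderiv ℝ f p (1, 0)

/-- Second partial derivative (with respect to the second coordinate) on `ℝ²`. -/
def pd2 (f : ℝ × ℝ → ℝ) (p : ℝ × ℝ) : ℝ := fderiv ℝ f p (0, 1)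

/-- Test functions: smooth compactly supported functions on `ℝ²`. -/
def IsTest (φ : ℝ × ℝ → ℝ) : Prop := ContDiff ℝ (⊤ : ℕ∞) φ ∧ HasCompactSupport φ

/-- Euclidean magnitude of a vector in `ℝ²`. -/
def emag (v : ℝ × ℝ) : ℝ := Real.sqrt (v.1 ^ 2 + v.2 ^ 2)

/-!
Write `∂̄ = ∂₁ + i ∂₂`. If `F = ϱ + i σ` is smooth and complex-valued with `ϱ > 0`, the vector field
`b = ∂̄F / ϱ` satisfies `ϱ b = ∇ϱ + ∇^⊥ σ`, and the rotated gradient of `σ` is divergence-free, so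
`Δϱ - div (ϱ b) = 0`. Since `|b| ϱ = |∂̄F|`, while `∇ϱ` and `∂̄F` together control all of `DF`, it
suffices to find `F` with `∂̄F ∈ L¹` and `DF ∉ L¹`: the failure of the `L¹` estimate for `∂̄`.

Such failures come from holomorphic functions, for which only the cutoff contributes to `∂̄`. Let
`P` be a Rudin–Shapiro polynomial with `n` lacunary coefficients of modulus `1 / √n`; it is bounded
on the unit disc independently of `n`. For `f z = P (exp z)`, the lacunary coefficient of index
about `2 ^ (k + 1)` makes the integral of `|f'|` over a period at least of order `2 ^ k / √n` when
`x` is about `-2 ^ (-k)`. Hence each of the `n` dyadic ranges of `x` contributes at least a constant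
times `1 / √n`, and `∫ |f'|` is at least of order `√n`. Summably weighted disjoint copies of cut-off
functions `2 + f` with rapidly growing `n`, plus a Gaussian for positivity, give `F`.
-/

open Set Filter Polynomial
open scoped ContDiff ENNReal Topology

section Differentiation

variable {E F : Type*} [NormedAddCommGroup E] [NormedSpace ℝ E] [NormedAddCommGroup F]
  [NormedSpace ℝ F]

theorem contDiff_fderiv_apply {f : E → F} (hf : ContDiff ℝ ∞ f) (v : E) :
    ContDiff ℝ ∞ fun x ↦ fderiv ℝ f x v :=
  (hf.fderiv_right (by simp)).clm_apply contDiff_const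

theorem fderiv_fderiv_apply_comm {f : E → F} {x : E} (hf : ContDiffAt ℝ 2 f x) (v w : E) :
    fderiv ℝ (fun y ↦ fderiv ℝ f y v) x w = fderiv ℝ (fun y ↦ fderiv ℝ f y w) x v := by
  have hdiff : DifferentiableAt ℝ (fderiv ℝ f) x :=
    (hf.fderiv_right (m := 1) (by norm_num)).differentiableAt one_ne_zero
  have hsymm : IsSymmSndFDerivAt ℝ f x := hf.isSymmSndFDerivAt (by simp)
  simpa [fderiv_clm_apply hdiff (differentiableAt_const _)] using hsymm.eq w v

theorem fderiv_re_apply {f : E → ℂ} {x : E} (hf : DifferentiableAt ℝ f x) (v : E) :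
    fderiv ℝ (fun y ↦ (f y).re) x v = (fderiv ℝ f x v).re :=
  DFunLike.congr_fun (Complex.reCLM.hasFDerivAt.comp x hf.hasFDerivAt).fderiv v

theorem fderiv_im_apply {f : E → ℂ} {x : E} (hf : DifferentiableAt ℝ f x) (v : E) :
    fderiv ℝ (fun y ↦ (f y).im) x v = (fderiv ℝ f x v).im :=
  DFunLike.congr_fun (Complex.imCLM.hasFDerivAt.comp x hf.hasFDerivAt).fderiv v

theorem opNorm_le_norm_add_norm (L : ℝ × ℝ →L[ℝ] F) : ‖L‖ ≤ ‖L (1, 0)‖ + ‖L (0, 1)‖ := by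
  refine L.opNorm_le_bound (by positivity) fun v ↦ ?_
  have hv : v = v.1 • ((1 : ℝ), (0 : ℝ)) + v.2 • ((0 : ℝ), (1 : ℝ)) := by ext <;> simp
  calc ‖L v‖ = ‖v.1 • L (1, 0) + v.2 • L (0, 1)‖ := by
        conv_lhs => rw [hv, map_add, map_smul, map_smul]
    _ ≤ ‖v.1‖ * ‖L (1, 0)‖ + ‖v.2‖ * ‖L (0, 1)‖ := by
        simpa only [norm_smul] using norm_add_le (v.1 • L (1, 0)) (v.2 • L (0, 1))
    _ ≤ ‖v‖ * ‖L (1, 0)‖ + ‖v‖ * ‖L (0, 1)‖ := by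
        gcongr
        exacts [norm_fst_le v, norm_snd_le v]
    _ = (‖L (1, 0)‖ + ‖L (0, 1)‖) * ‖v‖ := by ring

end Differentiation

section TestFunctions

variable {φ : ℝ × ℝ → ℝ}

theorem pd1_pd2_comm {f : ℝ × ℝ → ℝ} (hf : ContDiff ℝ 2 f) (p : ℝ × ℝ) :
    pd1 (pd2 f) p = pd2 (pd1 f) p :=
  fderiv_fderiv_apply_comm hf.contDiffAt _ _

theorem IsTest.fderiv_apply (hφ : IsTest φ) (v : ℝ × ℝ) : IsTest fun p ↦ fderiv ℝ φ p v :=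
  ⟨contDiff_fderiv_apply hφ.1 v, hφ.2.fderiv_apply ℝ v⟩

theorem isTest_pd1 (hφ : IsTest φ) : IsTest (pd1 φ) := hφ.fderiv_apply (1, 0)

theorem isTest_pd2 (hφ : IsTest φ) : IsTest (pd2 φ) := hφ.fderiv_apply (0, 1)

theorem IsTest.add {ψ : ℝ × ℝ → ℝ} (hφ : IsTest φ) (hψ : IsTest ψ) : IsTest (φ + ψ) :=
  ⟨hφ.1.add hψ.1, hφ.2.add hψ.2⟩

theorem IsTest.integrable_mul (hφ : IsTest φ) {g : ℝ × ℝ → ℝ} (hg : Continuous g) :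
    Integrable fun p ↦ φ p * g p :=
  (hφ.1.continuous.mul hg).integrable_of_hasCompactSupport hφ.2.mul_right

theorem IsTest.integrable_mul_fderiv_apply (hφ : IsTest φ) {g : ℝ × ℝ → ℝ}
    (hg : ContDiff ℝ 1 g) (v : ℝ × ℝ) : Integrable fun p ↦ φ p * fderiv ℝ g p v :=
  hφ.integrable_mul ((hg.continuous_fderiv one_ne_zero).clm_apply continuous_const)

theorem IsTest.integral_mul_fderiv_apply (hφ : IsTest φ) {g : ℝ × ℝ → ℝ} (hg : ContDiff ℝ 1 g)
    (v : ℝ × ℝ) : ∫ p, φ p * fderiv ℝ g p v = -∫ p, fderiv ℝ φ p v * g p :=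
  integral_mul_fderiv_eq_neg_fderiv_mul_of_integrable
    ((hφ.fderiv_apply v).integrable_mul hg.continuous) (hφ.integrable_mul_fderiv_apply hg v)
    (hφ.integrable_mul hg.continuous)
    (fun p _ ↦ hφ.1.differentiable (by simp) p) fun p _ ↦ hg.differentiable one_ne_zero p

theorem IsTest.integral_laplacian_mul (hφ : IsTest φ) {r : ℝ × ℝ → ℝ} (hr : ContDiff ℝ 1 r) :
    ∫ p, (pd1 (pd1 φ) p + pd2 (pd2 φ) p) * r p =
      -∫ p, (pd1 φ p * pd1 r p + pd2 φ p * pd2 r p) := by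
  have h1 := isTest_pd1 hφ
  have h2 := isTest_pd2 hφ
  have parts1 : ∫ p, pd1 φ p * pd1 r p = -∫ p, pd1 (pd1 φ) p * r p :=
    h1.integral_mul_fderiv_apply hr _
  have parts2 : ∫ p, pd2 φ p * pd2 r p = -∫ p, pd2 (pd2 φ) p * r p :=
    h2.integral_mul_fderiv_apply hr _
  have hleft : ∫ p, (pd1 (pd1 φ) p + pd2 (pd2 φ) p) * r p =
      (∫ p, pd1 (pd1 φ) p * r p) + ∫ p, pd2 (pd2 φ) p * r p := by
    simpa only [add_mul] using integral_add ((isTest_pd1 h1).integrable_mul hr.continuous)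
      ((isTest_pd2 h2).integrable_mul hr.continuous)
  have hright : ∫ p, (pd1 φ p * pd1 r p + pd2 φ p * pd2 r p) =
      (∫ p, pd1 φ p * pd1 r p) + ∫ p, pd2 φ p * pd2 r p :=
    integral_add (h1.integrable_mul_fderiv_apply hr _) (h2.integrable_mul_fderiv_apply hr _)
  rw [hleft, hright, parts1, parts2, neg_add, neg_neg, neg_neg]

theorem IsTest.integral_jacobian_eq_zero (hφ : IsTest φ) {s : ℝ × ℝ → ℝ}
    (hs : ContDiff ℝ 1 s) : ∫ p, (pd1 φ p * pd2 s p - pd2 φ p * pd1 s p) = 0 := by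
  have h1 := isTest_pd1 hφ
  have h2 := isTest_pd2 hφ
  have parts1 : ∫ p, pd1 φ p * pd2 s p = -∫ p, pd2 (pd1 φ) p * s p :=
    h1.integral_mul_fderiv_apply hs _
  have parts2 : ∫ p, pd2 φ p * pd1 s p = -∫ p, pd1 (pd2 φ) p * s p :=
    h2.integral_mul_fderiv_apply hs _
  have hcomm (p : ℝ × ℝ) : pd1 (pd2 φ) p = pd2 (pd1 φ) p :=
    pd1_pd2_comm (contDiff_infty.1 hφ.1 2) p
  have hsub : ∫ p, (pd1 φ p * pd2 s p - pd2 φ p * pd1 s p) =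
      (∫ p, pd1 φ p * pd2 s p) - ∫ p, pd2 φ p * pd1 s p :=
    integral_sub (h1.integrable_mul_fderiv_apply hs _) (h2.integrable_mul_fderiv_apply hs _)
  rw [hsub, parts1, parts2]
  simp only [hcomm, sub_self]

end TestFunctions

section CauchyRiemann

/-- The Cauchy–Riemann operator `∂₁ + i ∂₂` (twice the usual `∂̄`) of a complex-valued function
on `ℝ²`. -/
def dbar (F : ℝ × ℝ → ℂ) (p : ℝ × ℝ) : ℂ :=
  fderiv ℝ F p (1, 0) + Complex.I * fderiv ℝ F p (0, 1)

/-- The vector field `b = (∂̄F) / Re F`, for which `ϱ = Re F` solves `Δϱ - div (ϱ b) = 0`: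
`(Re F) b` is the gradient of `Re F` plus the rotated, divergence-free, gradient of `Im F`. -/
def drift (F : ℝ × ℝ → ℂ) (p : ℝ × ℝ) : ℝ × ℝ :=
  ((dbar F p).re / (F p).re, (dbar F p).im / (F p).re)

variable {F G : ℝ × ℝ → ℂ} {p : ℝ × ℝ}

theorem contDiff_dbar (hF : ContDiff ℝ ∞ F) : ContDiff ℝ ∞ (dbar F) :=
  (contDiff_fderiv_apply hF _).add (contDiff_const.mul (contDiff_fderiv_apply hF _))

theorem integrable_dbar (hF : Integrable (fderiv ℝ F)) : Integrable (dbar F) :=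
  (hF.apply_continuousLinearMap (1, 0)).add ((hF.apply_continuousLinearMap (0, 1)).const_mul _)

theorem dbar_add (hF : DifferentiableAt ℝ F p) (hG : DifferentiableAt ℝ G p) :
    dbar (fun q ↦ F q + G q) p = dbar F p + dbar G p := by
  simp only [dbar, fderiv_fun_add hF hG, add_apply]
  ring

theorem dbar_mul (hF : DifferentiableAt ℝ F p) (hG : DifferentiableAt ℝ G p) :
    dbar (fun q ↦ F q * G q) p = dbar F p * G p + F p * dbar G p := by
  simp only [dbar, fderiv_fun_mul hF hG, add_apply, smul_apply, smul_eq_mul]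
  ring

theorem dbar_const_smul (c : ℝ) (F : ℝ × ℝ → ℂ) (p : ℝ × ℝ) :
    dbar (fun q ↦ c • F q) p = c • dbar F p := by
  change dbar (c • F) p = _
  simp only [dbar, fderiv_const_smul_field, Pi.smul_apply, smul_apply, smul_add, mul_smul_comm]

theorem dbar_congr (h : F =ᶠ[𝓝 p] G) : dbar F p = dbar G p := by
  simp only [dbar, h.fderiv_eq]

theorem dbar_comp_sub (F : ℝ × ℝ → ℂ) (a p : ℝ × ℝ) :
    dbar (fun q ↦ F (q - a)) p = dbar F (p - a) := by
  simp only [dbar, fderiv_comp_sub]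

theorem re_dbar (hF : DifferentiableAt ℝ F p) :
    (dbar F p).re = pd1 (fun q ↦ (F q).re) p - pd2 (fun q ↦ (F q).im) p := by
  simp [dbar, pd1, pd2, fderiv_re_apply hF, fderiv_im_apply hF, sub_eq_add_neg]

theorem im_dbar (hF : DifferentiableAt ℝ F p) :
    (dbar F p).im = pd2 (fun q ↦ (F q).re) p + pd1 (fun q ↦ (F q).im) p := by
  simp [dbar, pd1, pd2, fderiv_re_apply hF, fderiv_im_apply hF, add_comm]

theorem fderiv_comp_equivRealProdCLM_symm {f : ℂ → ℂ}
    (hf : DifferentiableAt ℂ f (Complex.equivRealProdCLM.symm p)) (v : ℝ × ℝ) :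
    fderiv ℝ (f ∘ Complex.equivRealProdCLM.symm) p v =
      Complex.equivRealProdCLM.symm v * deriv f (Complex.equivRealProdCLM.symm p) := by
  have h := (hf.hasDerivAt.hasFDerivAt.restrictScalars ℝ).comp p
    Complex.equivRealProdCLM.symm.hasFDerivAt
  simp [h.fderiv]

theorem dbar_comp_equivRealProdCLM_symm {f : ℂ → ℂ}
    (hf : DifferentiableAt ℂ f (Complex.equivRealProdCLM.symm p)) :
    dbar (f ∘ Complex.equivRealProdCLM.symm) p = 0 := by
  simp only [dbar, fderiv_comp_equivRealProdCLM_symm hf, Complex.equivRealProdCLM_symm_apply,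
    Complex.ofReal_zero, Complex.ofReal_one]
  linear_combination deriv f (p.1 + p.2 * Complex.I) * Complex.I_mul_I

theorem contDiff_drift (hF : ContDiff ℝ ∞ F) (hpos : ∀ p, 0 < (F p).re) :
    ContDiff ℝ ∞ (drift F) := by
  have hre : ContDiff ℝ ∞ fun p ↦ (F p).re := Complex.reCLM.contDiff.comp hF
  have hdre : ContDiff ℝ ∞ fun p ↦ (dbar F p).re := Complex.reCLM.contDiff.comp (contDiff_dbar hF)
  have hdim : ContDiff ℝ ∞ fun p ↦ (dbar F p).im := Complex.imCLM.contDiff.comp (contDiff_dbar hF)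
  exact (hdre.div hre fun p ↦ (hpos p).ne').prodMk (hdim.div hre fun p ↦ (hpos p).ne')

theorem emag_drift_mul_re (hpos : 0 < (F p).re) : emag (drift F p) * (F p).re = ‖dbar F p‖ := by
  rw [emag, drift, div_pow, div_pow, ← add_div, sqrt_div' _ (sq_nonneg _), sqrt_sq hpos.le,
    div_mul_cancel₀ _ hpos.ne', Complex.norm_eq_sqrt_sq_add_sq]

theorem fderiv_drift_mul_re (φ : ℝ × ℝ → ℝ) (hF : DifferentiableAt ℝ F p)
    (hpos : 0 < (F p).re) :
    fderiv ℝ φ p (drift F p) * (F p).re =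
      (pd1 φ p * pd1 (fun q ↦ (F q).re) p + pd2 φ p * pd2 (fun q ↦ (F q).re) p) -
        (pd1 φ p * pd2 (fun q ↦ (F q).im) p - pd2 φ p * pd1 (fun q ↦ (F q).im) p) := by
  have hdrift : (F p).re • drift F p =
      (dbar F p).re • ((1 : ℝ), (0 : ℝ)) + (dbar F p).im • ((0 : ℝ), (1 : ℝ)) := by
    ext <;> simp [drift, mul_div_cancel₀ _ hpos.ne']
  calc fderiv ℝ φ p (drift F p) * (F p).re = fderiv ℝ φ p ((F p).re • drift F p) := by
        rw [map_smul, smul_eq_mul, mul_comm]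
    _ = (dbar F p).re * pd1 φ p + (dbar F p).im * pd2 φ p := by
        rw [hdrift, map_add, map_smul, map_smul, pd1, pd2, smul_eq_mul, smul_eq_mul]
    _ = _ := by
        rw [re_dbar hF, im_dbar hF]
        ring

theorem integral_laplacian_add_drift_mul_re {φ : ℝ × ℝ → ℝ} (hF : ContDiff ℝ 1 F)
    (hpos : ∀ p, 0 < (F p).re) (hφ : IsTest φ) :
    ∫ p, (pd1 (pd1 φ) p + pd2 (pd2 φ) p + fderiv ℝ φ p (drift F p)) * (F p).re = 0 := by
  have hr : ContDiff ℝ 1 fun p ↦ (F p).re := Complex.reCLM.contDiff.comp hF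
  have hs : ContDiff ℝ 1 fun p ↦ (F p).im := Complex.imCLM.contDiff.comp hF
  have h1 := isTest_pd1 hφ
  have h2 := isTest_pd2 hφ
  have hsplit (p : ℝ × ℝ) :=
    fderiv_drift_mul_re φ (hF.differentiable one_ne_zero p) (hpos p)
  have ilap : Integrable fun p ↦ (pd1 (pd1 φ) p + pd2 (pd2 φ) p) * (F p).re :=
    ((isTest_pd1 h1).add (isTest_pd2 h2)).integrable_mul hr.continuous
  have igrad : Integrable fun p ↦
      pd1 φ p * pd1 (fun q ↦ (F q).re) p + pd2 φ p * pd2 (fun q ↦ (F q).re) p :=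
    (h1.integrable_mul_fderiv_apply hr _).add (h2.integrable_mul_fderiv_apply hr _)
  have ijac : Integrable fun p ↦
      pd1 φ p * pd2 (fun q ↦ (F q).im) p - pd2 φ p * pd1 (fun q ↦ (F q).im) p :=
    (h1.integrable_mul_fderiv_apply hs _).sub (h2.integrable_mul_fderiv_apply hs _)
  have idrift : Integrable fun p ↦ fderiv ℝ φ p (drift F p) * (F p).re :=
    (igrad.sub ijac).congr (.of_forall fun p ↦ (hsplit p).symm)
  simp only [add_mul _ (fderiv ℝ φ _ _)]
  rw [integral_add ilap idrift, hφ.integral_laplacian_mul hr]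
  simp only [hsplit]
  rw [integral_sub igrad ijac, hφ.integral_jacobian_eq_zero hs, sub_zero, neg_add_cancel]

theorem abs_fst_le_emag (v : ℝ × ℝ) : |v.1| ≤ emag v :=
  abs_le_sqrt (le_add_of_nonneg_right (sq_nonneg _))

theorem abs_snd_le_emag (v : ℝ × ℝ) : |v.2| ≤ emag v :=
  abs_le_sqrt (le_add_of_nonneg_left (sq_nonneg _))

theorem norm_fderiv_le_emag_add_norm_dbar (hF : DifferentiableAt ℝ F p) :
    ‖fderiv ℝ F p‖ ≤ 4 * emag (pd1 (fun q ↦ (F q).re) p, pd2 (fun q ↦ (F q).re) p) +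
      2 * ‖dbar F p‖ := by
  set g := (pd1 (fun q ↦ (F q).re) p, pd2 (fun q ↦ (F q).re) p) with hg
  have hre1 : (fderiv ℝ F p (1, 0)).re = g.1 := (fderiv_re_apply hF _).symm
  have hre2 : (fderiv ℝ F p (0, 1)).re = g.2 := (fderiv_re_apply hF _).symm
  have him1 : (fderiv ℝ F p (1, 0)).im = (dbar F p).im - g.2 := by
    rw [im_dbar hF, hg, add_sub_cancel_left]
    exact (fderiv_im_apply hF _).symm
  have him2 : (fderiv ℝ F p (0, 1)).im = g.1 - (dbar F p).re := by
    rw [re_dbar hF, hg, sub_sub_cancel]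
    exact (fderiv_im_apply hF _).symm
  have h1 : ‖fderiv ℝ F p (1, 0)‖ ≤ |g.1| + (|(dbar F p).im| + |g.2|) := by
    grw [Complex.norm_le_abs_re_add_abs_im, hre1, him1, abs_sub]
  have h2 : ‖fderiv ℝ F p (0, 1)‖ ≤ |g.2| + (|g.1| + |(dbar F p).re|) := by
    grw [Complex.norm_le_abs_re_add_abs_im, hre2, him2, abs_sub]
  linarith [opNorm_le_norm_add_norm (fderiv ℝ F p), abs_fst_le_emag g, abs_snd_le_emag g,
    Complex.abs_re_le_norm (dbar F p), Complex.abs_im_le_norm (dbar F p)]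

theorem not_integrable_emag_gradient_re (hF : ContDiff ℝ 1 F) (hdbar : Integrable (dbar F))
    (hfderiv : ¬ Integrable (fderiv ℝ F)) :
    ¬ Integrable fun p ↦ emag (pd1 (fun q ↦ (F q).re) p, pd2 (fun q ↦ (F q).re) p) := fun h ↦
  hfderiv <| ((h.const_mul 4).add (hdbar.norm.const_mul 2)).mono'
    (hF.continuous_fderiv one_ne_zero).aestronglyMeasurable
    (.of_forall fun p ↦ norm_fderiv_le_emag_add_norm_dbar (hF.differentiable one_ne_zero p))

end CauchyRiemann

section RudinShapiro

/-- The Rudin–Shapiro pair of polynomials of degree less than `2 ^ k`, with weight `a` on each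
lacunary increment; `a = 1` gives the classical recursion. -/
def rudinShapiro (a : ℝ) : ℕ → ℂ[X] × ℂ[X]
  | 0 => (0, 1)
  | k + 1 =>
    ((rudinShapiro a k).1 + C (a : ℂ) * (X ^ 2 ^ k * (rudinShapiro a k).2),
      C (a : ℂ) * (rudinShapiro a k).1 - X ^ 2 ^ k * (rudinShapiro a k).2)

theorem norm_sq_add_mul_add_norm_sq_mul_sub (a : ℝ) (z w : ℂ) :
    ‖z + a * w‖ ^ 2 + ‖a * z - w‖ ^ 2 = (1 + a ^ 2) * (‖z‖ ^ 2 + ‖w‖ ^ 2) := by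
  simp only [← Complex.normSq_eq_norm_sq, Complex.normSq_apply, Complex.add_re, Complex.add_im,
    Complex.sub_re, Complex.sub_im, Complex.re_ofReal_mul, Complex.im_ofReal_mul]
  ring

theorem norm_sq_eval_rudinShapiro (a : ℝ) (k : ℕ) {z : ℂ} (hz : ‖z‖ = 1) :
    ‖(rudinShapiro a k).1.eval z‖ ^ 2 + ‖(rudinShapiro a k).2.eval z‖ ^ 2 = (1 + a ^ 2) ^ k := by
  induction k with
  | zero => simp [rudinShapiro]
  | succ k ih =>
    simp only [rudinShapiro, eval_add, eval_sub, eval_mul, eval_C, eval_pow, eval_X]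
    rw [norm_sq_add_mul_add_norm_sq_mul_sub, norm_mul, norm_pow, hz, one_pow, one_mul, ih,
      ← pow_succ']

theorem coeff_rudinShapiro_eq_zero (a : ℝ) {k j : ℕ} (hj : 2 ^ k ≤ j) :
    (rudinShapiro a k).1.coeff j = 0 ∧ (rudinShapiro a k).2.coeff j = 0 := by
  induction k generalizing j with
  | zero =>
    have hj0 : j ≠ 0 := by lia
    simp [rudinShapiro, coeff_one, hj0]
  | succ k ih =>
    rw [pow_succ] at hj
    have hshift : 2 ^ k ≤ j - 2 ^ k := by lia
    simp [rudinShapiro, coeff_X_pow_mul', ih (j := j) (by lia), ih hshift]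

theorem two_pow_succ_sub_one (k : ℕ) : 2 ^ (k + 1) - 1 = 2 ^ k - 1 + 2 ^ k := by
  have := Nat.one_le_two_pow (n := k)
  lia

theorem norm_coeff_rudinShapiro_snd (a : ℝ) (k : ℕ) :
    ‖(rudinShapiro a k).2.coeff (2 ^ k - 1)‖ = 1 := by
  induction k with
  | zero => simp [rudinShapiro]
  | succ k ih =>
    have hzero := (coeff_rudinShapiro_eq_zero a (k := k) (Nat.le_add_left _ (2 ^ k - 1))).1
    simp only [rudinShapiro, two_pow_succ_sub_one, coeff_sub, coeff_C_mul, coeff_X_pow_mul, hzero,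
      mul_zero, zero_sub, norm_neg, ih]

theorem norm_coeff_rudinShapiro_fst (a : ℝ) {n k : ℕ} (hk : k < n) :
    ‖(rudinShapiro a n).1.coeff (2 ^ (k + 1) - 1)‖ = |a| := by
  induction n with
  | zero => lia
  | succ n ih =>
    rcases Nat.lt_succ_iff_lt_or_eq.1 hk with hlt | rfl
    · have hnot : ¬ 2 ^ n ≤ 2 ^ (k + 1) - 1 := by
        have := Nat.pow_le_pow_right two_pos (Nat.succ_le_of_lt hlt)
        have := Nat.one_le_two_pow (n := n)
        lia
      simpa [rudinShapiro, coeff_X_pow_mul', hnot] using ih hlt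
    · have hzero := (coeff_rudinShapiro_eq_zero a (k := k) (Nat.le_add_left _ (2 ^ k - 1))).1
      simp [rudinShapiro, two_pow_succ_sub_one, coeff_X_pow_mul, hzero,
        norm_coeff_rudinShapiro_snd]

theorem norm_eval_le_of_forall_norm_eq_one {P : ℂ[X]} {B : ℝ}
    (hP : ∀ z : ℂ, ‖z‖ = 1 → ‖P.eval z‖ ≤ B) {z : ℂ} (hz : ‖z‖ ≤ 1) : ‖P.eval z‖ ≤ B := by
  refine Complex.norm_le_of_forall_mem_frontier_norm_le (U := Metric.ball (0 : ℂ) 1)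
    Metric.isBounded_ball P.differentiable.diffContOnCl (fun w hw ↦ hP w ?_) ?_
  · simpa [frontier_ball (0 : ℂ) one_ne_zero] using hw
  · simpa [closure_ball (0 : ℂ) one_ne_zero] using hz

theorem norm_eval_rudinShapiro_fst_le {n : ℕ} (hn : n ≠ 0) {z : ℂ} (hz : ‖z‖ ≤ 1) :
    ‖(rudinShapiro (√n)⁻¹ n).1.eval z‖ ≤ 2 := by
  refine norm_eval_le_of_forall_norm_eq_one (fun w hw ↦ ?_) hz
  have hsum := norm_sq_eval_rudinShapiro (√n)⁻¹ n hw
  have hpow : (1 + (√n)⁻¹ ^ 2) ^ n ≤ exp 1 := by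
    calc (1 + (√n)⁻¹ ^ 2) ^ n ≤ exp ((√n)⁻¹ ^ 2) ^ n := by
          gcongr
          linarith [add_one_le_exp ((√n)⁻¹ ^ 2)]
      _ = exp 1 := by
          rw [← exp_nat_mul, inv_pow, sq_sqrt n.cast_nonneg, mul_inv_cancel₀ (by exact_mod_cast hn)]
  refine le_of_sq_le_sq ?_ zero_le_two
  linarith [exp_one_lt_d9, sq_nonneg ‖(rudinShapiro (√n)⁻¹ n).2.eval w‖]

end RudinShapiro

section LowerBound

theorem enorm_coeff_mul_pow_le_lintegral_circleMap (Q : ℂ[X]) (m : ℕ) (R : ℝ) :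
    ENNReal.ofReal (2 * π) * ‖Q.coeff m * (R : ℂ) ^ m‖ₑ ≤
      ∫⁻ θ in Ioo 0 (2 * π), ‖Q.eval (circleMap 0 R θ)‖ₑ := by
  have : Fact (0 < 2 * π) := ⟨two_pi_pos⟩
  have heval (θ : ℝ) :
      (Q.comp (C (R : ℂ) * X)).toAddCircle θ = Q.eval (circleMap 0 R θ) := by
    simp [toAddCircle, circleMap, AddCircle.toCircle_apply_mk, Circle.coe_exp,
      ← coe_aeval_eq_eval]
  have hcoeff := (Q.comp (C (R : ℂ) * X)).fourierCoeff_toAddCircle_natCast m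
  rw [fourierCoeff_eq_intervalIntegral _ _ 0, comp_C_mul_X_coeff, zero_add,
    intervalIntegral.integral_of_le two_pi_pos.le, integral_Ioc_eq_integral_Ioo] at hcoeff
  have hcancel : ENNReal.ofReal (2 * π) * ‖1 / (2 * π)‖ₑ = 1 := by
    rw [Real.enorm_of_nonneg (by positivity), ← ENNReal.ofReal_mul two_pi_pos.le,
      mul_one_div_cancel two_pi_pos.ne', ENNReal.ofReal_one]
  rw [← hcoeff, enorm_smul, ← mul_assoc, hcancel, one_mul]
  refine (enorm_integral_le_lintegral_enorm _).trans_eq (lintegral_congr fun θ ↦ ?_)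
  rw [enorm_smul, heval, ← ofReal_norm (fourier _ _), fourier_apply, Circle.norm_coe,
    ENNReal.ofReal_one, one_mul]

theorem coeff_X_mul_derivative (P : ℂ[X]) (m : ℕ) :
    (X * derivative P).coeff m = m * P.coeff m := by
  cases m with
  | zero => simp
  | succ m => rw [coeff_X_mul, coeff_derivative, mul_comm]; push_cast; rfl

theorem exp_neg_two_mul_two_pow_le {k : ℕ} {x : ℝ} (hx : x ∈ Icc (-(2 ^ k)⁻¹ : ℝ) 0) :
    2 ^ k * exp (-2) ≤ ((2 ^ (k + 1) - 1 : ℕ) : ℝ) * exp x ^ (2 ^ (k + 1) - 1) := by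
  rw [← exp_nat_mul]
  have hcast : ((2 ^ (k + 1) - 1 : ℕ) : ℝ) = 2 * 2 ^ k - 1 := by
    rw [Nat.cast_sub Nat.one_le_two_pow]
    push_cast
    ring
  have hone : (1 : ℝ) ≤ 2 ^ k := one_le_pow₀ one_le_two
  have hx1 : -1 ≤ 2 ^ k * x := by
    have := mul_le_mul_of_nonneg_left hx.1 (zero_le_one.trans hone)
    rwa [mul_neg, mul_inv_cancel₀ (by positivity)] at this
  rw [hcast]
  have hexp : -2 ≤ (2 * 2 ^ k - 1) * x := by linear_combination 2 * hx1 + hx.2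
  have hle : (2 : ℝ) ^ k ≤ 2 * 2 ^ k - 1 := by linarith
  gcongr
  exact zero_le_one.trans (hone.trans hle)

theorem natCast_mul_le_lintegral_Ico_of_dyadic {f : ℝ → ℝ≥0∞} {A : ℝ≥0∞} {n : ℕ}
    (hf : ∀ k < n, ∀ x ∈ Ico (-(2 ^ k)⁻¹ : ℝ) (-(2 ^ (k + 1))⁻¹), 2 ^ k * A ≤ f x) :
    n * (A / 2) ≤ ∫⁻ x in Ico (-1 : ℝ) (-(2 ^ n)⁻¹), f x := by
  induction n with
  | zero => simp
  | succ n ih =>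
    have hhalf : ((2 : ℝ) ^ (n + 1))⁻¹ = (2 ^ n)⁻¹ / 2 := by rw [pow_succ, mul_inv, div_eq_mul_inv]
    have hpos : (0 : ℝ) < (2 ^ n)⁻¹ := by positivity
    have hle : ((2 : ℝ) ^ n)⁻¹ ≤ 1 := inv_le_one_of_one_le₀ (one_le_pow₀ one_le_two)
    have hlast : A / 2 ≤ ∫⁻ x in Ico (-(2 ^ n)⁻¹ : ℝ) (-(2 ^ (n + 1))⁻¹), f x := by
      calc A / 2 = 2 ^ n * A * volume (Ico (-(2 ^ n)⁻¹ : ℝ) (-(2 ^ (n + 1))⁻¹)) := by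
            have hlen : 2 ^ n * (-((2 : ℝ) ^ n)⁻¹ / 2 - -(2 ^ n)⁻¹) = 2⁻¹ := by field_simp; ring
            rw [Real.volume_Ico, hhalf, ← neg_div, mul_right_comm, mul_comm,
              ← ENNReal.ofReal_ofNat 2, ← ENNReal.ofReal_pow two_pos.le,
              ← ENNReal.ofReal_mul (by positivity), hlen, ENNReal.ofReal_inv_of_pos two_pos,
              div_eq_mul_inv]
        _ ≤ _ := by
            rw [← setLIntegral_const]
            exact setLIntegral_mono' measurableSet_Ico (hf n n.lt_succ_self)
    rw [← Ico_union_Ico_eq_Ico (b := (-(2 ^ n)⁻¹ : ℝ)) (by linarith) (by linarith),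
      lintegral_union measurableSet_Ico Ico_disjoint_Ico_same, Nat.cast_succ, add_mul, one_mul]
    exact add_le_add (ih fun k hk ↦ hf k (hk.trans n.lt_succ_self)) hlast

theorem le_lintegral_enorm_X_mul_derivative_rudinShapiro (a : ℝ) (n : ℕ) :
    ENNReal.ofReal (π * exp (-2) * (n * |a|)) ≤
      ∫⁻ x in Ico (-1) (-(2 ^ n)⁻¹), ∫⁻ y in Ioo 0 (2 * π),
        ‖(X * derivative (rudinShapiro a n).1).eval (circleMap 0 (exp x) y)‖ₑ := by
  have hdyadic : ∀ k < n, ∀ x ∈ Ico (-(2 ^ k)⁻¹ : ℝ) (-(2 ^ (k + 1))⁻¹),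
      2 ^ k * ENNReal.ofReal (2 * π * exp (-2) * |a|) ≤ ∫⁻ y in Ioo 0 (2 * π),
        ‖(X * derivative (rudinShapiro a n).1).eval (circleMap 0 (exp x) y)‖ₑ := by
    intro k hk x hx
    set m := 2 ^ (k + 1) - 1
    refine le_trans ?_ (enorm_coeff_mul_pow_le_lintegral_circleMap _ m _)
    have hexp : 2 ^ k * exp (-2) ≤ m * exp x ^ m :=
      exp_neg_two_mul_two_pow_le ⟨hx.1, hx.2.le.trans (by simp)⟩
    have hnorm : ‖(X * derivative (rudinShapiro a n).1).coeff m * (exp x : ℂ) ^ m‖ =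
        m * exp x ^ m * |a| := by
      rw [coeff_X_mul_derivative, norm_mul, norm_mul, norm_coeff_rudinShapiro_fst a hk, norm_pow,
        Complex.norm_natCast, Complex.norm_real, norm_of_nonneg (exp_pos x).le]
      ring
    rw [← ofReal_norm (_ * _), hnorm, ← ENNReal.ofReal_mul two_pi_pos.le, ← ENNReal.ofReal_ofNat 2,
      ← ENNReal.ofReal_pow two_pos.le, ← ENNReal.ofReal_mul (by positivity)]
    gcongr ENNReal.ofReal ?_
    calc _ = 2 * π * (2 ^ k * exp (-2) * |a|) := by ring
      _ ≤ _ := by gcongr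
  refine le_trans (le_of_eq ?_) (natCast_mul_le_lintegral_Ico_of_dyadic hdyadic)
  rw [← ENNReal.ofReal_ofNat 2, ← ENNReal.ofReal_div_of_pos two_pos, ← ENNReal.ofReal_natCast,
    ← ENNReal.ofReal_mul n.cast_nonneg]
  congr 1
  ring

end LowerBound

section Cutoff

theorem lintegral_enorm_deriv_comp_mul_left {F : Type*} [NormedAddCommGroup F] [NormedSpace ℝ F]
    (g : ℝ → F) {c : ℝ} (hc : c ≠ 0) :
    ∫⁻ x, ‖deriv (fun y ↦ g (c * y)) x‖ₑ = ∫⁻ x, ‖deriv g x‖ₑ := by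
  simp only [deriv_comp_mul_left, enorm_smul]
  conv_rhs =>
    rw [← smul_map_volume_mul_left hc, lintegral_smul_measure,
      (measurableEmbedding_mulLeft₀ hc).lintegral_map]
  rw [lintegral_const_mul' _ _ enorm_ne_top, enorm_eq_ofReal_abs, smul_eq_mul]

theorem lintegral_enorm_deriv_smoothTransition_lt_top :
    ∫⁻ x, ‖deriv smoothTransition x‖ₑ < ⊤ := by
  have hsupp : HasCompactSupport (deriv smoothTransition) := by
    refine .intro (isCompact_Icc (a := (0 : ℝ)) (b := 1)) fun x hx ↦ ?_
    rcases not_and_or.1 hx with h | h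
    · have : smoothTransition =ᶠ[𝓝 x] fun _ ↦ 0 := by
        filter_upwards [Iio_mem_nhds (not_le.1 h)] with y hy
        exact smoothTransition.zero_of_nonpos hy.le
      rw [this.deriv_eq, deriv_const]
    · have : smoothTransition =ᶠ[𝓝 x] fun _ ↦ 1 := by
        filter_upwards [Ioi_mem_nhds (not_le.1 h)] with y hy
        exact smoothTransition.one_of_one_le hy.le
      rw [this.deriv_eq, deriv_const]
  have hcont : Continuous (deriv smoothTransition) :=
    (smoothTransition.contDiff (n := 1)).continuous_deriv le_rfl
  exact (hcont.integrable_of_hasCompactSupport hsupp).hasFiniteIntegral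

/-- A smooth function with values in `[0, 1]`, equal to `1` on `[a, b]` and to `0` outside
`[a - δ, b + δ]`. -/
def cutoff (a b δ x : ℝ) : ℝ :=
  smoothTransition (δ⁻¹ * (x - (a - δ))) * smoothTransition (δ⁻¹ * (b + δ - x))

variable {a b δ x : ℝ}

theorem contDiff_cutoff : ContDiff ℝ ∞ (cutoff a b δ) :=
  (smoothTransition.contDiff.comp (by fun_prop)).mul (smoothTransition.contDiff.comp (by fun_prop))

theorem cutoff_nonneg : 0 ≤ cutoff a b δ x :=
  mul_nonneg (smoothTransition.nonneg _) (smoothTransition.nonneg _)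

theorem cutoff_le_one : cutoff a b δ x ≤ 1 :=
  mul_le_one₀ (smoothTransition.le_one _) (smoothTransition.nonneg _) (smoothTransition.le_one _)

theorem cutoff_eq_one (hδ : 0 < δ) (hx : x ∈ Icc a b) : cutoff a b δ x = 1 := by
  have hleft : 1 ≤ δ⁻¹ * (x - (a - δ)) := by
    rw [← div_eq_inv_mul, one_le_div hδ]
    linarith [hx.1]
  have hright : 1 ≤ δ⁻¹ * (b + δ - x) := by
    rw [← div_eq_inv_mul, one_le_div hδ]
    linarith [hx.2]
  rw [cutoff, smoothTransition.one_of_one_le hleft, smoothTransition.one_of_one_le hright, one_mul]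

theorem support_cutoff_subset (hδ : 0 < δ) :
    Function.support (cutoff a b δ) ⊆ Icc (a - δ) (b + δ) := by
  intro x hx
  by_contra hout
  rcases not_and_or.1 hout with h | h
  · refine hx (mul_eq_zero_of_left (smoothTransition.zero_of_nonpos ?_) _)
    exact mul_nonpos_of_nonneg_of_nonpos (inv_pos.2 hδ).le (by linarith)
  · refine hx (mul_eq_zero_of_right _ (smoothTransition.zero_of_nonpos ?_))
    exact mul_nonpos_of_nonneg_of_nonpos (inv_pos.2 hδ).le (by linarith)

theorem tsupport_cutoff_subset (hδ : 0 < δ) : tsupport (cutoff a b δ) ⊆ Icc (a - δ) (b + δ) :=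
  closure_minimal (support_cutoff_subset hδ) isClosed_Icc

theorem lintegral_enorm_cutoff_le (hδ : 0 < δ) :
    ∫⁻ x, ‖cutoff a b δ x‖ₑ ≤ ENNReal.ofReal (b + δ - (a - δ)) := by
  rw [← Real.volume_Icc, ← setLIntegral_one, ← lintegral_indicator measurableSet_Icc]
  refine lintegral_mono fun x ↦ ?_
  by_cases hx : x ∈ Icc (a - δ) (b + δ)
  · rw [indicator_of_mem hx, enorm_of_nonneg cutoff_nonneg]
    exact ENNReal.ofReal_le_one.2 cutoff_le_one
  · simp [Function.notMem_support.1 fun h ↦ hx (support_cutoff_subset hδ h)]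

theorem lintegral_enorm_deriv_cutoff_le (hδ : δ ≠ 0) :
    ∫⁻ x, ‖deriv (cutoff a b δ) x‖ₑ ≤ 2 * ∫⁻ x, ‖deriv smoothTransition x‖ₑ := by
  set g : ℝ → ℝ := fun x ↦ smoothTransition (δ⁻¹ * x) with hg
  have hgdiff : ContDiff ℝ 1 g := smoothTransition.contDiff.comp (by fun_prop)
  have hgle (x : ℝ) : ‖g x‖ₑ ≤ 1 := by
    rw [hg, enorm_of_nonneg (smoothTransition.nonneg _)]
    exact ENNReal.ofReal_le_one.2 (smoothTransition.le_one _)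
  have hderiv (x : ℝ) : deriv (cutoff a b δ) x =
      deriv g (x - (a - δ)) * g (b + δ - x) - g (x - (a - δ)) * deriv g (b + δ - x) := by
    have : Differentiable ℝ g := hgdiff.differentiable one_ne_zero
    change deriv (fun x ↦ g (x - (a - δ)) * g (b + δ - x)) x = _
    rw [deriv_fun_mul (by fun_prop) (by fun_prop), deriv_comp_sub_const, deriv_comp_const_sub,
      mul_neg, ← sub_eq_add_neg]
  have : Continuous (deriv g) := hgdiff.continuous_deriv le_rfl
  calc ∫⁻ x, ‖deriv (cutoff a b δ) x‖ₑ
      ≤ ∫⁻ x, (‖deriv g (x - (a - δ))‖ₑ + ‖deriv g (b + δ - x)‖ₑ) := by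
        refine lintegral_mono fun x ↦ ?_
        grw [hderiv, enorm_sub_le, enorm_mul, enorm_mul, hgle, hgle, mul_one, one_mul]
    _ = 2 * ∫⁻ x, ‖deriv g x‖ₑ := by
        rw [lintegral_add_left (by fun_prop), lintegral_sub_right_eq_self (‖deriv g ·‖ₑ),
          lintegral_sub_left_eq_self (‖deriv g ·‖ₑ), two_mul]
    _ = _ := by rw [lintegral_enorm_deriv_comp_mul_left _ (inv_ne_zero hδ)]

end Cutoff

section Windowed

/-- The function `f` on `ℂ ≅ ℝ²`, multiplied by the product cutoff `α x * β y`. -/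
def windowed (α β : ℝ → ℝ) (f : ℂ → ℂ) (p : ℝ × ℝ) : ℂ :=
  ((α p.1 * β p.2 : ℝ) : ℂ) * f (Complex.equivRealProdCLM.symm p)

variable {α β : ℝ → ℝ} {f : ℂ → ℂ}

theorem contDiff_windowed (hα : ContDiff ℝ ∞ α) (hβ : ContDiff ℝ ∞ β) (hf : Differentiable ℂ f) :
    ContDiff ℝ ∞ (windowed α β f) := by
  refine .mul (Complex.ofRealCLM.contDiff.comp ?_) ?_
  · exact (hα.comp contDiff_fst).mul (hβ.comp contDiff_snd)
  · exact (hf.contDiff.restrict_scalars ℝ).comp Complex.equivRealProdCLM.symm.contDiff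

theorem windowed_eq_zero_of_snd {p : ℝ × ℝ} (hp : β p.2 = 0) : windowed α β f p = 0 := by
  rw [windowed, hp, mul_zero, Complex.ofReal_zero, zero_mul]

theorem re_windowed_nonneg {p : ℝ × ℝ} (hα : 0 ≤ α p.1) (hβ : 0 ≤ β p.2)
    (hf : α p.1 ≠ 0 → 0 ≤ (f (Complex.equivRealProdCLM.symm p)).re) :
    0 ≤ (windowed α β f p).re := by
  rw [windowed, Complex.re_ofReal_mul]
  rcases eq_or_ne (α p.1) 0 with h | h
  · rw [h, zero_mul, zero_mul]
  · exact mul_nonneg (mul_nonneg hα hβ) (hf h)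

theorem dbar_windowed (hα : Differentiable ℝ α) (hβ : Differentiable ℝ β)
    (hf : Differentiable ℂ f) (p : ℝ × ℝ) :
    dbar (windowed α β f) p = (deriv α p.1 * β p.2 + Complex.I * (α p.1 * deriv β p.2)) *
      f (Complex.equivRealProdCLM.symm p) := by
  have hcut : HasFDerivAt (fun q : ℝ × ℝ ↦ ((α q.1 * β q.2 : ℝ) : ℂ)) _ p :=
    Complex.ofRealCLM.hasFDerivAt.comp p <|
      ((hα p.1).hasDerivAt.hasFDerivAt.comp p hasFDerivAt_fst).mul
        ((hβ p.2).hasDerivAt.hasFDerivAt.comp p hasFDerivAt_snd)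
  have hhol : DifferentiableAt ℝ (f ∘ Complex.equivRealProdCLM.symm) p :=
    ((hf _).restrictScalars ℝ).comp p Complex.equivRealProdCLM.symm.differentiableAt
  have hcut' : dbar (fun q : ℝ × ℝ ↦ ((α q.1 * β q.2 : ℝ) : ℂ)) p =
      deriv α p.1 * β p.2 + Complex.I * (α p.1 * deriv β p.2) := by
    rw [dbar, hcut.fderiv]
    simp [mul_comm]
  have hmul := dbar_mul hcut.differentiableAt hhol
  rwa [dbar_comp_equivRealProdCLM_symm (hf _), mul_zero, add_zero, hcut'] at hmul

theorem enorm_complex_ofReal (x : ℝ) : ‖(x : ℂ)‖ₑ = ‖x‖ₑ :=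
  congrArg _ (Complex.nnnorm_real x)

variable {B : ℝ≥0∞}

theorem lintegral_enorm_windowed_le (hα : Continuous α) (hβ : Continuous β)
    (hB : ∀ z : ℂ, z.re ∈ tsupport α → ‖f z‖ₑ ≤ B) :
    ∫⁻ p, ‖windowed α β f p‖ₑ ≤ (∫⁻ x, ‖α x‖ₑ) * (∫⁻ y, ‖β y‖ₑ) * B := by
  rw [← lintegral_prod_mul (by fun_prop) (by fun_prop), ← lintegral_mul_const _ (by fun_prop)]
  refine lintegral_mono fun p ↦ ?_
  rw [windowed, enorm_mul, enorm_complex_ofReal, enorm_mul]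
  rcases eq_or_ne (α p.1) 0 with h | h
  · simp [h]
  · gcongr
    exact hB _ (by simpa using subset_tsupport α h)

theorem lintegral_enorm_dbar_windowed_le (hα : ContDiff ℝ 1 α) (hβ : ContDiff ℝ 1 β)
    (hf : Differentiable ℂ f) (hB : ∀ z : ℂ, z.re ∈ tsupport α → ‖f z‖ₑ ≤ B) :
    ∫⁻ p, ‖dbar (windowed α β f) p‖ₑ ≤
      ((∫⁻ x, ‖deriv α x‖ₑ) * (∫⁻ y, ‖β y‖ₑ) + (∫⁻ x, ‖α x‖ₑ) * ∫⁻ y, ‖deriv β y‖ₑ) * B := by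
  have : Continuous (deriv α) := hα.continuous_deriv le_rfl
  have : Continuous (deriv β) := hβ.continuous_deriv le_rfl
  have hαc := hα.continuous
  have hβc := hβ.continuous
  rw [← lintegral_prod_mul (by fun_prop) (by fun_prop),
    ← lintegral_prod_mul (by fun_prop) (by fun_prop), ← lintegral_add_left (by fun_prop),
    ← lintegral_mul_const _ (by fun_prop)]
  refine lintegral_mono fun p ↦ ?_
  rw [dbar_windowed (hα.differentiable one_ne_zero) (hβ.differentiable one_ne_zero) hf, enorm_mul]
  by_cases hp : p.1 ∈ tsupport α
  · gcongr
    · grw [enorm_add_le]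
      simp [enorm_mul, enorm_complex_ofReal, show ‖Complex.I‖ₑ = 1 by simp [enorm]]
    · exact hB _ (by simpa using hp)
  · have hzero : α p.1 = 0 := image_eq_zero_of_notMem_tsupport hp
    have hderiv : deriv α p.1 = 0 :=
      Function.notMem_support.1 fun h ↦ hp (support_deriv_subset h)
    simp [hzero, hderiv]

theorem lintegral_enorm_deriv_le_lintegral_enorm_fderiv_windowed {I J : Set ℝ} (hI : IsOpen I)
    (hJ : IsOpen J) (hα : ∀ x ∈ I, α x = 1) (hβ : ∀ y ∈ J, β y = 1) (hf : Differentiable ℂ f) :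
    ∫⁻ x in I, ∫⁻ y in J, ‖deriv f (x + y * Complex.I)‖ₑ ≤
      ∫⁻ p, ‖fderiv ℝ (windowed α β f) p‖ₑ := by
  have hderiv : Continuous (deriv f) := hf.contDiff.continuous_deriv (n := 1) le_rfl
  have hle : ∀ p ∈ I ×ˢ J,
      ‖deriv f (p.1 + p.2 * Complex.I)‖ₑ ≤ ‖fderiv ℝ (windowed α β f) p‖ₑ := by
    intro p hp
    have heq : windowed α β f =ᶠ[𝓝 p] f ∘ Complex.equivRealProdCLM.symm := by
      filter_upwards [(hI.prod hJ).mem_nhds hp] with q hq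
      simp [windowed, hα _ hq.1, hβ _ hq.2]
    calc ‖deriv f (p.1 + p.2 * Complex.I)‖ₑ = ‖fderiv ℝ (windowed α β f) p (1, 0)‖ₑ := by
          rw [heq.fderiv_eq, fderiv_comp_equivRealProdCLM_symm (hf _)]
          simp [Complex.equivRealProdCLM_symm_apply]
      _ ≤ ‖fderiv ℝ (windowed α β f) p‖ₑ * ‖((1 : ℝ), (0 : ℝ))‖ₑ :=
          (fderiv ℝ (windowed α β f) p).le_opENorm _
      _ = _ := by simp [← ofReal_norm, Prod.norm_mk]
  calc ∫⁻ x in I, ∫⁻ y in J, ‖deriv f (x + y * Complex.I)‖ₑ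
      = ∫⁻ p in I ×ˢ J, ‖deriv f (p.1 + p.2 * Complex.I)‖ₑ :=
        (setLIntegral_prod (fun p : ℝ × ℝ ↦ ‖deriv f (p.1 + p.2 * Complex.I)‖ₑ) (by fun_prop)).symm
    _ ≤ ∫⁻ p in I ×ˢ J, ‖fderiv ℝ (windowed α β f) p‖ₑ :=
        setLIntegral_mono' (hI.prod hJ).measurableSet hle
    _ ≤ _ := setLIntegral_le_lintegral _ _

end Windowed

section Block

variable {n : ℕ}

/-- The entire function `2 + P ∘ exp`, where `P` is the `n`-th Rudin–Shapiro polynomial, scaled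
so that `|P| ≤ 2` on the unit disc. -/
def blockFunction (n : ℕ) (z : ℂ) : ℂ :=
  2 + (rudinShapiro (√n)⁻¹ n).1.eval (Complex.exp z)

/-- The building block of the construction: `blockFunction n` cut off to the strip
`-1 ≤ x ≤ -2⁻ⁿ`, inside the left half-plane, and to one period in the vertical direction. -/
def block (n : ℕ) : ℝ × ℝ → ℂ :=
  windowed (cutoff (-1) (-(2 ^ n)⁻¹) (2 ^ n)⁻¹) (cutoff 0 (2 * π) 1) (blockFunction n)

theorem differentiable_blockFunction : Differentiable ℂ (blockFunction n) :=
  ((rudinShapiro (√n)⁻¹ n).1.differentiable.comp Complex.differentiable_exp).const_add 2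

theorem deriv_blockFunction (x y : ℝ) : deriv (blockFunction n) (x + y * Complex.I) =
    (X * derivative (rudinShapiro (√n)⁻¹ n).1).eval (circleMap 0 (exp x) y) := by
  have hexp : Complex.exp (x + y * Complex.I) = circleMap 0 (exp x) y := by
    rw [circleMap, zero_add, Complex.exp_add, Complex.ofReal_exp]
  have h := (((rudinShapiro (√n)⁻¹ n).1.hasDerivAt _).comp (x + y * Complex.I : ℂ)
    (Complex.hasDerivAt_exp _)).const_add 2
  rw [← hexp, eval_mul, eval_X, mul_comm (Complex.exp _)]
  exact h.deriv

theorem norm_blockFunction_sub_two_le (hn : n ≠ 0) {z : ℂ} (hz : z.re ≤ 0) :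
    ‖blockFunction n z - 2‖ ≤ 2 := by
  rw [blockFunction, add_sub_cancel_left]
  exact norm_eval_rudinShapiro_fst_le hn (by rwa [Complex.norm_exp, exp_le_one_iff])

theorem enorm_blockFunction_le (hn : n ≠ 0) {z : ℂ} (hz : z.re ≤ 0) :
    ‖blockFunction n z‖ₑ ≤ 4 := by
  rw [← ofReal_norm, ← ENNReal.ofReal_ofNat 4]
  gcongr
  calc ‖blockFunction n z‖ ≤ ‖blockFunction n z - 2‖ + ‖(2 : ℂ)‖ := norm_le_norm_sub_add _ _
    _ ≤ 2 + 2 := by grw [norm_blockFunction_sub_two_le hn hz, Complex.norm_ofNat]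
    _ = OfNat.ofNat 4 := by norm_num

theorem re_blockFunction_nonneg (hn : n ≠ 0) {z : ℂ} (hz : z.re ≤ 0) :
    0 ≤ (blockFunction n z).re := by
  have h := (Complex.abs_re_le_norm _).trans (norm_blockFunction_sub_two_le hn hz)
  rw [Complex.sub_re, Complex.re_ofNat] at h
  linarith [(abs_le.1 h).1]

theorem tsupport_horizontalCutoff_subset :
    tsupport (cutoff (-1) (-(2 ^ n)⁻¹) (2 ^ n)⁻¹) ⊆ Iic 0 := fun x hx ↦ by
  simpa using (tsupport_cutoff_subset (by positivity) hx).2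

theorem lintegral_enorm_horizontalCutoff_le :
    ∫⁻ x, ‖cutoff (-1) (-(2 ^ n)⁻¹) (2 ^ n)⁻¹ x‖ₑ ≤ 2 := by
  have hδ : ((2 : ℝ) ^ n)⁻¹ ≤ 1 := inv_le_one_of_one_le₀ (one_le_pow₀ one_le_two)
  refine (lintegral_enorm_cutoff_le (by positivity)).trans ?_
  rw [← ENNReal.ofReal_ofNat 2]
  gcongr
  linarith

theorem lintegral_enorm_verticalCutoff_le : ∫⁻ y, ‖cutoff 0 (2 * π) 1 y‖ₑ ≤ 10 := by
  refine (lintegral_enorm_cutoff_le one_pos).trans ?_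
  rw [← ENNReal.ofReal_ofNat 10]
  gcongr
  linarith [pi_lt_four]

theorem contDiff_block (n : ℕ) : ContDiff ℝ ∞ (block n) :=
  contDiff_windowed contDiff_cutoff contDiff_cutoff differentiable_blockFunction

theorem re_block_nonneg (hn : n ≠ 0) (p : ℝ × ℝ) : 0 ≤ (block n p).re := by
  refine re_windowed_nonneg cutoff_nonneg cutoff_nonneg fun h ↦ re_blockFunction_nonneg hn ?_
  simpa using tsupport_horizontalCutoff_subset (subset_tsupport _ h)

theorem support_block_subset : Function.support (block n) ⊆ Prod.snd ⁻¹' Icc (-1) 8 := by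
  intro p hp
  have h : p.2 ∈ Icc (0 - 1) (2 * π + 1) :=
    support_cutoff_subset one_pos fun h ↦ hp (windowed_eq_zero_of_snd h)
  exact ⟨by linarith [h.1], by linarith [h.2, pi_lt_d2]⟩

theorem lintegral_enorm_block_le (hn : n ≠ 0) : ∫⁻ p, ‖block n p‖ₑ ≤ 80 := by
  grw [block, lintegral_enorm_windowed_le contDiff_cutoff.continuous contDiff_cutoff.continuous
    (fun z hz ↦ enorm_blockFunction_le hn (tsupport_horizontalCutoff_subset hz)),
    lintegral_enorm_horizontalCutoff_le, lintegral_enorm_verticalCutoff_le]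
  norm_num

theorem lintegral_enorm_dbar_block_le (hn : n ≠ 0) :
    ∫⁻ p, ‖dbar (block n) p‖ₑ ≤ 96 * ∫⁻ x, ‖deriv smoothTransition x‖ₑ := by
  grw [block, lintegral_enorm_dbar_windowed_le (contDiff_infty.1 contDiff_cutoff 1)
      (contDiff_infty.1 contDiff_cutoff 1) differentiable_blockFunction
      (fun z hz ↦ enorm_blockFunction_le hn (tsupport_horizontalCutoff_subset hz)),
    lintegral_enorm_horizontalCutoff_le, lintegral_enorm_verticalCutoff_le,
    lintegral_enorm_deriv_cutoff_le (by positivity), lintegral_enorm_deriv_cutoff_le one_ne_zero]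
  exact le_of_eq (by ring)

theorem le_lintegral_enorm_fderiv_block (n : ℕ) :
    ENNReal.ofReal (π * exp (-2) * √n) ≤ ∫⁻ p, ‖fderiv ℝ (block n) p‖ₑ := by
  have hsqrt : n * |(√n)⁻¹| = √n := by
    rw [abs_of_nonneg (by positivity), ← div_eq_mul_inv, div_sqrt]
  have hlower := le_lintegral_enorm_X_mul_derivative_rudinShapiro (√n)⁻¹ n
  rw [hsqrt, ← restrict_Ioo_eq_restrict_Ico] at hlower
  simp only [← deriv_blockFunction] at hlower
  exact hlower.trans <| lintegral_enorm_deriv_le_lintegral_enorm_fderiv_windowed isOpen_Ioo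
    isOpen_Ioo (fun x hx ↦ cutoff_eq_one (by positivity) (Ioo_subset_Icc_self hx))
    (fun y hy ↦ cutoff_eq_one one_pos (Ioo_subset_Icc_self hy)) differentiable_blockFunction

theorem tendsto_lintegral_enorm_fderiv_block :
    Tendsto (fun n ↦ ∫⁻ p, ‖fderiv ℝ (block n) p‖ₑ) atTop (𝓝 ⊤) := by
  refine tendsto_nhds_top_mono' (ENNReal.tendsto_ofReal_nhds_top.2 ?_)
    le_lintegral_enorm_fderiv_block
  exact (tendsto_sqrt_atTop.comp tendsto_natCast_atTop_atTop).const_mul_atTop (by positivity)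

end Block

section LocallyFiniteSum

variable {ι E F : Type*} [TopologicalSpace E] [AddCommMonoid F] {u : ι → E → F} {x : E}

theorem finsum_eventuallyEq {n : ι} (hlf : LocallyFinite fun m ↦ tsupport (u m))
    (hn : ∀ m ≠ n, x ∉ tsupport (u m)) : (fun y ↦ ∑ᶠ m, u m y) =ᶠ[𝓝 x] u n := by
  filter_upwards [hlf.eventually_subset (fun m ↦ isClosed_tsupport _) x] with y hy
  exact finsum_eq_single _ n fun m hm ↦ image_eq_zero_of_notMem_tsupport fun h ↦ hn m hm (hy h)

theorem exists_finsum_eventuallyEq [Nonempty ι] (hlf : LocallyFinite fun n ↦ tsupport (u n))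
    (hdisj : Pairwise fun m n ↦ Disjoint (tsupport (u m)) (tsupport (u n))) (x : E) :
    ∃ n, (fun y ↦ ∑ᶠ m, u m y) =ᶠ[𝓝 x] u n := by
  by_cases h : ∃ n, x ∈ tsupport (u n)
  · obtain ⟨n, hx⟩ := h
    exact ⟨n, finsum_eventuallyEq hlf fun m hm ↦ (hdisj hm).notMem_of_mem_right hx⟩
  · inhabit ι
    exact ⟨default, finsum_eventuallyEq hlf fun m _ ↦ not_exists.1 h m⟩

end LocallyFiniteSum

section Gluing

theorem lintegral_enorm_le_tsum {α F : Type*} [MeasurableSpace α] {μ : Measure α}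
    [TopologicalSpace F] [ContinuousENorm F] {g : α → F} {u : ℕ → α → F}
    (hu : ∀ n, AEStronglyMeasurable (u n) μ)
    (hg : ∀ x, ∃ n, g x = u n x) : ∫⁻ x, ‖g x‖ₑ ∂μ ≤ ∑' n, ∫⁻ x, ‖u n x‖ₑ ∂μ := by
  rw [← lintegral_tsum fun n ↦ (hu n).enorm]
  refine lintegral_mono fun x ↦ ?_
  obtain ⟨n, hn⟩ := hg x
  rw [hn]
  exact ENNReal.le_tsum n

theorem lintegral_enorm_fderiv_le_of_eventuallyEq {E F : Type*} [NormedAddCommGroup E]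
    [NormedSpace ℝ E] [MeasurableSpace E] {μ : Measure E} [NormedAddCommGroup F] [NormedSpace ℝ F]
    {u g : E → F} (h : ∀ x ∈ tsupport u, g =ᶠ[𝓝 x] u) :
    ∫⁻ x, ‖fderiv ℝ u x‖ₑ ∂μ ≤ ∫⁻ x, ‖fderiv ℝ g x‖ₑ ∂μ := by
  refine lintegral_mono fun x ↦ ?_
  by_cases hx : x ∈ tsupport u
  · rw [(h x hx).fderiv_eq]
  · rw [Function.notMem_support.1 fun h ↦ hx (support_fderiv_subset ℝ h)]
    exact (enorm_zero (E := E →L[ℝ] F)).trans_le zero_le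

theorem lintegral_enorm_smul_comp_sub {E F : Type*} [AddGroup E] [MeasurableSpace E]
    [MeasurableAdd E] {μ : Measure E} [μ.IsAddRightInvariant] [NormedAddCommGroup F]
    [NormedSpace ℝ F] (f : E → F) (c : ℝ) (a : E) :
    ∫⁻ x, ‖c • f (x - a)‖ₑ ∂μ = ‖c‖ₑ * ∫⁻ x, ‖f x‖ₑ ∂μ := by
  simp only [enorm_smul]
  rw [lintegral_const_mul' _ _ enorm_ne_top, lintegral_sub_right_eq_self (‖f ·‖ₑ)]

theorem tsum_enorm_half_pow_mul (C : ℝ≥0∞) : ∑' k : ℕ, ‖(2⁻¹ : ℝ) ^ k‖ₑ * C = 2 * C := by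
  have hhalf : ‖(2⁻¹ : ℝ)‖ₑ = 2⁻¹ := by
    rw [enorm_of_nonneg (by positivity), ENNReal.ofReal_inv_of_pos two_pos, ENNReal.ofReal_ofNat]
  simp only [enorm_pow, hhalf]
  rw [ENNReal.tsum_mul_right, ENNReal.tsum_geometric_two]

end Gluing

section GluedBlocks

/-- The `k`-th copy of `block n`, scaled by `2⁻ᵏ` and moved up by `10 k`, so that different copies
have disjoint supports. -/
def placedBlock (k n : ℕ) (p : ℝ × ℝ) : ℂ := (2⁻¹ : ℝ) ^ k • block n (p - ((0 : ℝ), (10 * k : ℝ)))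

variable {k n : ℕ}

theorem contDiff_placedBlock : ContDiff ℝ ∞ (placedBlock k n) :=
  ((contDiff_block n).comp (contDiff_id.sub contDiff_const)).const_smul _

theorem re_placedBlock_nonneg (hn : n ≠ 0) (p : ℝ × ℝ) : 0 ≤ (placedBlock k n p).re := by
  rw [placedBlock, Complex.smul_re]
  exact smul_nonneg (by positivity) (re_block_nonneg hn _)

theorem tsupport_placedBlock_subset :
    tsupport (placedBlock k n) ⊆ Prod.snd ⁻¹' Icc (10 * k - 1 : ℝ) (10 * k + 8) := by
  refine closure_minimal (fun p hp ↦ ?_) (isClosed_Icc.preimage continuous_snd)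
  have h : p - ((0 : ℝ), (10 * k : ℝ)) ∈ Prod.snd ⁻¹' Icc (-1 : ℝ) 8 :=
    support_block_subset fun h ↦ hp (by rw [placedBlock, h, smul_zero])
  simp only [mem_preimage, Prod.snd_sub, mem_Icc] at h ⊢
  constructor <;> linarith

theorem disjoint_tsupport_placedBlock {l m : ℕ} (hkl : k ≠ l) :
    Disjoint (tsupport (placedBlock k n)) (tsupport (placedBlock l m)) := by
  refine disjoint_left.2 fun p hk hl ↦ hkl ?_
  have hk := tsupport_placedBlock_subset hk
  have hl := tsupport_placedBlock_subset hl
  simp only [mem_preimage, mem_Icc] at hk hl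
  have hlt : (k : ℝ) < l + 1 := by linarith
  have hgt : (l : ℝ) < k + 1 := by linarith
  norm_cast at hlt hgt
  omega

theorem locallyFinite_tsupport_placedBlock (N : ℕ → ℕ) :
    LocallyFinite fun k ↦ tsupport (placedBlock k (N k)) := by
  intro p
  obtain ⟨m, hm⟩ := exists_nat_gt (p.2 + 1)
  refine ⟨Prod.snd ⁻¹' Iio (m : ℝ), (isOpen_Iio.preimage continuous_snd).mem_nhds ?_,
    (finite_Iio (m + 1)).subset ?_⟩
  · simp only [mem_preimage, mem_Iio]
    linarith
  · rintro k ⟨q, hq, hqm⟩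
    have hq := tsupport_placedBlock_subset hq
    simp only [mem_preimage, mem_Icc, mem_Iio] at hq hqm
    have hlt : (k : ℝ) < m + 1 := by linarith [k.cast_nonneg (α := ℝ)]
    exact_mod_cast hlt

theorem lintegral_enorm_placedBlock_le (hn : n ≠ 0) :
    ∫⁻ p, ‖placedBlock k n p‖ₑ ≤ ‖(2⁻¹ : ℝ) ^ k‖ₑ * 80 := by
  simp only [placedBlock]
  rw [lintegral_enorm_smul_comp_sub]
  grw [lintegral_enorm_block_le hn]

theorem lintegral_enorm_dbar_placedBlock_le (hn : n ≠ 0) :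
    ∫⁻ p, ‖dbar (placedBlock k n) p‖ₑ ≤
      ‖(2⁻¹ : ℝ) ^ k‖ₑ * (96 * ∫⁻ x, ‖deriv smoothTransition x‖ₑ) := by
  have hdbar (p : ℝ × ℝ) : dbar (placedBlock k n) p =
      (2⁻¹ : ℝ) ^ k • dbar (block n) (p - ((0 : ℝ), (10 * k : ℝ))) := by
    rw [← dbar_comp_sub, ← dbar_const_smul]
    rfl
  simp only [hdbar]
  rw [lintegral_enorm_smul_comp_sub]
  grw [lintegral_enorm_dbar_block_le hn]

theorem lintegral_enorm_fderiv_placedBlock : ∫⁻ p, ‖fderiv ℝ (placedBlock k n) p‖ₑ =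
    ‖(2⁻¹ : ℝ) ^ k‖ₑ * ∫⁻ p, ‖fderiv ℝ (block n) p‖ₑ := by
  have hfderiv (p : ℝ × ℝ) : fderiv ℝ (placedBlock k n) p =
      (2⁻¹ : ℝ) ^ k • fderiv ℝ (block n) (p - ((0 : ℝ), (10 * k : ℝ))) := by
    rw [← fderiv_comp_sub, ← Pi.smul_apply, ← fderiv_const_smul_field]
    rfl
  simp only [hfderiv]
  exact lintegral_enorm_smul_comp_sub (fderiv ℝ (block n)) _ _

theorem exists_le_lintegral_enorm_fderiv_placedBlock (k : ℕ) :
    ∃ n ≠ 0, (k : ℝ≥0∞) ≤ ∫⁻ p, ‖fderiv ℝ (placedBlock k n) p‖ₑ := by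
  simp only [lintegral_enorm_fderiv_placedBlock]
  have hpow : ‖(2⁻¹ : ℝ) ^ k‖ₑ ≠ 0 := by simp
  have hlim := ENNReal.Tendsto.const_mul (a := ‖(2⁻¹ : ℝ) ^ k‖ₑ)
    tendsto_lintegral_enorm_fderiv_block (.inr enorm_ne_top)
  rw [ENNReal.mul_top hpow] at hlim
  have hlarge := hlim.eventually_const_le (ENNReal.natCast_lt_top k)
  exact ((eventually_ne_atTop 0).and hlarge).exists

theorem exists_contDiff_integrable_dbar_not_integrable_fderiv :
    ∃ T : ℝ × ℝ → ℂ, ContDiff ℝ ∞ T ∧ (∀ p, 0 ≤ (T p).re) ∧ Integrable T ∧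
      Integrable (dbar T) ∧ ¬ Integrable (fderiv ℝ T) := by
  choose N hN hfderiv using exists_le_lintegral_enorm_fderiv_placedBlock
  have hlf := locallyFinite_tsupport_placedBlock N
  set T : ℝ × ℝ → ℂ := fun p ↦ ∑ᶠ k, placedBlock k (N k) p
  have hlocal (p : ℝ × ℝ) : ∃ k, T =ᶠ[𝓝 p] placedBlock k (N k) :=
    exists_finsum_eventuallyEq hlf (fun _ _ ↦ disjoint_tsupport_placedBlock) p
  have hT : ContDiff ℝ ∞ T := contDiff_iff_contDiffAt.2 fun p ↦
    have ⟨_, hk⟩ := hlocal p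
    contDiff_placedBlock.contDiffAt.congr_of_eventuallyEq hk
  refine ⟨T, hT, fun p ↦ ?_, ⟨hT.continuous.aestronglyMeasurable, ?_⟩,
    ⟨(contDiff_dbar hT).continuous.aestronglyMeasurable, ?_⟩, fun h ↦ h.2.ne ?_⟩
  · obtain ⟨k, hk⟩ := hlocal p
    rw [hk.eq_of_nhds]
    exact re_placedBlock_nonneg (hN k) p
  · calc ∫⁻ p, ‖T p‖ₑ ≤ ∑' k, ∫⁻ p, ‖placedBlock k (N k) p‖ₑ :=
          lintegral_enorm_le_tsum (fun _ ↦ contDiff_placedBlock.continuous.aestronglyMeasurable)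
            fun p ↦ (hlocal p).imp fun _ hk ↦ hk.eq_of_nhds
      _ ≤ ∑' k : ℕ, ‖(2⁻¹ : ℝ) ^ k‖ₑ * 80 :=
          ENNReal.tsum_le_tsum fun k ↦ lintegral_enorm_placedBlock_le (hN k)
      _ < ⊤ := by
          rw [tsum_enorm_half_pow_mul]
          exact ENNReal.mul_lt_top (by simp) (by simp)
  · calc ∫⁻ p, ‖dbar T p‖ₑ ≤ ∑' k, ∫⁻ p, ‖dbar (placedBlock k (N k)) p‖ₑ :=
          lintegral_enorm_le_tsum
            (fun _ ↦ (contDiff_dbar contDiff_placedBlock).continuous.aestronglyMeasurable)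
            fun p ↦ (hlocal p).imp fun _ hk ↦ dbar_congr hk
      _ ≤ ∑' k : ℕ, ‖(2⁻¹ : ℝ) ^ k‖ₑ * (96 * ∫⁻ x, ‖deriv smoothTransition x‖ₑ) :=
          ENNReal.tsum_le_tsum fun k ↦ lintegral_enorm_dbar_placedBlock_le (hN k)
      _ < ⊤ := by
          rw [tsum_enorm_half_pow_mul]
          exact ENNReal.mul_lt_top (by simp)
            (ENNReal.mul_lt_top (by simp) lintegral_enorm_deriv_smoothTransition_lt_top)
  · refine top_le_iff.1 (ENNReal.iSup_natCast.ge.trans (iSup_le fun k ↦ (hfderiv k).trans ?_))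
    exact lintegral_enorm_fderiv_le_of_eventuallyEq fun p hp ↦ finsum_eventuallyEq hlf
      fun l hl ↦ (disjoint_tsupport_placedBlock hl).notMem_of_mem_right hp

end GluedBlocks

section Density

theorem integrable_fderiv_mul_prod {f g : ℝ → ℝ} (hf : Differentiable ℝ f)
    (hg : Differentiable ℝ g) (hfi : Integrable f) (hgi : Integrable g)
    (hfi' : Integrable (deriv f)) (hgi' : Integrable (deriv g)) :
    Integrable (fderiv ℝ fun p : ℝ × ℝ ↦ f p.1 * g p.2) := by
  have hfderiv : (fderiv ℝ fun p : ℝ × ℝ ↦ f p.1 * g p.2) = fun p ↦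
      (f p.1 * deriv g p.2) • ContinuousLinearMap.snd ℝ ℝ ℝ +
        (deriv f p.1 * g p.2) • ContinuousLinearMap.fst ℝ ℝ ℝ := by
    ext1 p
    have hfst : HasFDerivAt Prod.fst (ContinuousLinearMap.fst ℝ ℝ ℝ) p := hasFDerivAt_fst
    have hsnd : HasFDerivAt Prod.snd (ContinuousLinearMap.snd ℝ ℝ ℝ) p := hasFDerivAt_snd
    have hf₁ := (hf p.1).hasDerivAt.comp_hasFDerivAt p hfst
    have hg₂ := (hg p.2).hasDerivAt.comp_hasFDerivAt p hsnd
    refine (hf₁.mul hg₂).fderiv.trans ?_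
    simp only [Function.comp_apply, smul_smul, mul_comm (g p.2)]
  rw [hfderiv]
  have h₁ := (hfi.mul_prod hgi').smul_const (ContinuousLinearMap.snd ℝ ℝ ℝ)
  have h₂ := (hfi'.mul_prod hgi).smul_const (ContinuousLinearMap.fst ℝ ℝ ℝ)
  exact h₁.add h₂

theorem exists_contDiff_pos_integrable_fderiv : ∃ f : ℝ × ℝ → ℝ, ContDiff ℝ ∞ f ∧
    (∀ p, 0 < f p) ∧ Integrable f ∧ Integrable (fderiv ℝ f) := by
  have hf : Integrable fun x : ℝ ↦ exp (-x ^ 2) := by simpa using integrable_exp_neg_mul_sq one_pos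
  have hderiv (x : ℝ) : deriv (fun x : ℝ ↦ exp (-x ^ 2)) x = x * exp (-1 * x ^ 2) * (-2) := by
    rw [((hasDerivAt_pow 2 x).fun_neg.exp).deriv]
    push_cast
    ring_nf
  have hf' : Integrable (deriv fun x : ℝ ↦ exp (-x ^ 2)) :=
    ((integrable_mul_exp_neg_mul_sq one_pos).mul_const _).congr
      (ae_of_all _ fun x ↦ (hderiv x).symm)
  have hdiff : Differentiable ℝ fun x : ℝ ↦ exp (-x ^ 2) := by fun_prop
  exact ⟨fun p ↦ exp (-p.1 ^ 2) * exp (-p.2 ^ 2), by fun_prop, fun p ↦ by positivity,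
    hf.mul_prod hf, integrable_fderiv_mul_prod hdiff hdiff hf hf hf' hf'⟩

theorem exists_pos_re_integrable_dbar_not_integrable_fderiv :
    ∃ F : ℝ × ℝ → ℂ, ContDiff ℝ ∞ F ∧ (∀ p, 0 < (F p).re) ∧ Integrable F ∧
      Integrable (dbar F) ∧ ¬ Integrable (fderiv ℝ F) := by
  obtain ⟨f, hf, hpos, hfi, hfi'⟩ := exists_contDiff_pos_integrable_fderiv
  obtain ⟨T, hT, hnonneg, hTi, hTdbar, hTfderiv⟩ :=
    exists_contDiff_integrable_dbar_not_integrable_fderiv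
  set G : ℝ × ℝ → ℂ := fun p ↦ f p
  have hG : ContDiff ℝ ∞ G := Complex.ofRealCLM.contDiff.comp hf
  have hGd : Differentiable ℝ G := hG.differentiable (by simp)
  have hTd : Differentiable ℝ T := hT.differentiable (by simp)
  have hGi' : Integrable (fderiv ℝ G) := by
    have hfderiv (p : ℝ × ℝ) : fderiv ℝ G p = Complex.ofRealCLM ∘L fderiv ℝ f p :=
      (Complex.ofRealCLM.hasFDerivAt.comp p (hf.differentiable (by simp) p).hasFDerivAt).fderiv
    rw [funext hfderiv]
    exact (ContinuousLinearMap.compL ℝ (ℝ × ℝ) ℝ ℂ Complex.ofRealCLM).integrable_comp hfi'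
  refine ⟨fun p ↦ G p + T p, hG.add hT, fun p ↦ ?_, hfi.ofReal.add hTi, ?_, fun h ↦ hTfderiv ?_⟩
  · rw [Complex.add_re]
    exact add_pos_of_pos_of_nonneg (hpos p) (hnonneg p)
  · refine ((integrable_dbar hGi').add hTdbar).congr (ae_of_all _ fun p ↦ ?_)
    exact (dbar_add (hGd p) (hTd p)).symm
  · refine (h.sub hGi').congr (ae_of_all _ fun p ↦ ?_)
    rw [Pi.sub_apply, fderiv_fun_add (hGd p) (hTd p), add_sub_cancel_left]

theorem exists_integral_re_eq_one_integrable_dbar_not_integrable_fderiv :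
    ∃ F : ℝ × ℝ → ℂ, ContDiff ℝ ∞ F ∧ (∀ p, 0 < (F p).re) ∧ ∫ p, (F p).re = 1 ∧
      Integrable (dbar F) ∧ ¬ Integrable (fderiv ℝ F) := by
  obtain ⟨F, hF, hpos, hFi, hdbar, hfderiv⟩ :=
    exists_pos_re_integrable_dbar_not_integrable_fderiv
  set m : ℝ := ∫ p, (F p).re
  have hm : 0 < m := integral_pos_of_integrable_nonneg_nonzero
    (Complex.continuous_re.comp hF.continuous) hFi.re (fun p ↦ (hpos p).le) (hpos 0).ne'
  have hsmul : fderiv ℝ (fun p ↦ m⁻¹ • F p) = m⁻¹ • fderiv ℝ F :=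
    fderiv_const_smul_field (f := F) m⁻¹
  refine ⟨fun p ↦ m⁻¹ • F p, hF.const_smul _, fun p ↦ ?_, ?_, ?_, ?_⟩
  · rw [Complex.smul_re]
    exact smul_pos (inv_pos.2 hm) (hpos p)
  · simp only [Complex.smul_re, smul_eq_mul]
    rw [integral_const_mul, inv_mul_cancel₀ hm.ne']
  · simp only [funext (dbar_const_smul m⁻¹ F)]
    exact hdbar.smul m⁻¹
  · rw [hsmul]
    exact (integrable_smul_iff (inv_ne_zero hm.ne') (fderiv ℝ F)).not.2 hfderiv

end Density

/-- There exist a probability density `ϱ ∈ C^∞(ℝ²)` and a `C^∞` vector field `b : ℝ² → ℝ²`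
such that `Δϱ − div(ϱ b) = 0` holds in the weak sense
(`∫ [Δφ + ⟨b,∇φ⟩] ϱ dx = 0` for all test functions `φ`) and `|b|ϱ ∈ L¹(ℝ²)`, but
`|∇ϱ| ∉ L¹(ℝ²)`. -/
theorem smooth_density_FPK_gradient_not_integrable :
    ∃ (ϱ : ℝ × ℝ → ℝ) (b : ℝ × ℝ → ℝ × ℝ),
      ContDiff ℝ (⊤ : ℕ∞) ϱ ∧ (∀ p, 0 ≤ ϱ p) ∧ (∫ p, ϱ p = 1) ∧
      ContDiff ℝ (⊤ : ℕ∞) b ∧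
      (∀ φ : ℝ × ℝ → ℝ, IsTest φ →
        ∫ p, (pd1 (pd1 φ) p + pd2 (pd2 φ) p + fderiv ℝ φ p (b p)) * ϱ p = 0) ∧
      Integrable (fun p => emag (b p) * ϱ p) ∧
      ¬ Integrable (fun p => emag (pd1 ϱ p, pd2 ϱ p)) := by
  obtain ⟨F, hF, hpos, hone, hdbar, hfderiv⟩ :=
    exists_integral_re_eq_one_integrable_dbar_not_integrable_fderiv
  have hF₁ : ContDiff ℝ 1 F := hF.of_le (by simp)
  refine ⟨fun p ↦ (F p).re, drift F, Complex.reCLM.contDiff.comp hF, fun p ↦ (hpos p).le, hone,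
    contDiff_drift hF hpos, fun φ hφ ↦ integral_laplacian_add_drift_mul_re hF₁ hpos hφ, ?_,
    not_integrable_emag_gradient_re hF₁ hdbar hfderiv⟩
  simpa only [emag_drift_mul_re (hpos _)] using hdbar.norm
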